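/- Let m and n be positive integers, let A = (n+1)^{n+1}/n^n, B = n/(n+1), and δ ≥ 0 real, and let f(t) = (A t^n (1−t))^m. Set λ₀ = 2(B^n − B^{n+1})^m (mn+m+1)!/(m!·(mn)!). Then λ₀ ≤ (∫₀¹ (1+δt)² |f′(t)| dt)/(∫₀¹ f(t) dt) ≤ (1+δ)² λ₀. -/

import Mathlib

lemma beta_aux (b : ℕ) : ∀ a : ℕ, (∫ t in (0:ℝ)..1, t ^ a * (1 - t) ^ b) * ((a + b + 1).factorial : ℝ)
    = (a.factorial : ℝ) * (b.factorial : ℝ) := by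
  induction b with
  | zero =>
    intro a
    simp [integral_pow, Nat.factorial_succ]
    field_simp
  | succ b ih =>
    intro a
    have h1 : ∫ t in (0:ℝ)..1, (((a:ℝ) + 1) * (t ^ a * (1 - t) ^ (b + 1))
        - ((b:ℝ) + 1) * (t ^ (a + 1) * (1 - t) ^ b)) = 0 := by
      rw [intervalIntegral.integral_eq_sub_of_hasDerivAt
        (f := fun t : ℝ => t ^ (a + 1) * (1 - t) ^ (b + 1))]
      · simp
      · intro x _
        have h := (hasDerivAt_pow (a + 1) x).mul (((hasDerivAt_id x).const_sub 1).pow (b + 1))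
        refine HasDerivAt.congr_deriv h ?_
        simp
        ring
      · apply Continuous.intervalIntegrable
        fun_prop
    rw [intervalIntegral.integral_sub
      (by apply Continuous.intervalIntegrable; fun_prop)
      (by apply Continuous.intervalIntegrable; fun_prop),
      intervalIntegral.integral_const_mul, intervalIntegral.integral_const_mul] at h1
    have h2 := ih (a + 1)
    have e : a + 1 + b + 1 = a + (b + 1) + 1 := by ring
    rw [e] at h2
    rw [Nat.factorial_succ a] at h2
    rw [Nat.factorial_succ b]
    push_cast at h2 ⊢
    have ha : (a:ℝ) + 1 ≠ 0 := by positivity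
    apply mul_left_cancel₀ ha
    linear_combination ((a + (b + 1) + 1).factorial : ℝ) * h1 + ((b:ℝ) + 1) * h2

lemma deriv_aux (m n : ℕ) (hn : 0 < n) (A x : ℝ) :
    HasDerivAt (fun t : ℝ => (A * t ^ n * (1 - t)) ^ m)
      ((m : ℝ) * (A * x ^ n * (1 - x)) ^ (m - 1) * (A * x ^ (n - 1) * (n - (n + 1) * x))) x := by
  have h := ((((hasDerivAt_pow n x).const_mul A).mul ((hasDerivAt_id x).const_sub 1)).pow m)
  refine HasDerivAt.congr_deriv h ?_
  obtain ⟨k, rfl⟩ : ∃ k, n = k + 1 := ⟨n - 1, by omega⟩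
  simp
  left
  ring

lemma main_aux (m n : ℕ) (hm : 0 < m) (hn : 0 < n) (A : ℝ) (hA : 0 < A) :
    (∫ t in (0 : ℝ)..1, |deriv (fun t : ℝ => (A * t ^ n * (1 - t)) ^ m) t|)
      = 2 * (A * ((n : ℝ) / (n + 1)) ^ n * (1 - (n : ℝ) / (n + 1))) ^ m := by
  set B : ℝ := (n : ℝ) / (n + 1) with hB
  have hB0 : 0 ≤ B := by positivity
  have hB1 : B ≤ 1 := by rw [hB, div_le_one (by positivity)]; linarith
  have hBn : (n + 1 : ℝ) * B = n := by rw [hB]; field_simp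
  set g : ℝ → ℝ := fun x => ((m : ℝ) * (A * x ^ n * (1 - x)) ^ (m - 1) *
    (A * x ^ (n - 1) * (n - (n + 1) * x))) with hg
  have hgc : Continuous g := by rw [hg]; fun_prop
  have hd : deriv (fun t : ℝ => (A * t ^ n * (1 - t)) ^ m) = g :=
    funext fun x => (deriv_aux m n hn A x).deriv
  have hi : ∀ a b : ℝ, ∫ t in a..b, g t =
      (A * b ^ n * (1 - b)) ^ m - (A * a ^ n * (1 - a)) ^ m := fun a b =>
    intervalIntegral.integral_eq_sub_of_hasDerivAt
      (fun x _ => deriv_aux m n hn A x) (hgc.intervalIntegrable _ _)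
  rw [hd, ← intervalIntegral.integral_add_adjacent_intervals
    (hgc.abs.intervalIntegrable 0 B) (hgc.abs.intervalIntegrable B 1)]
  have e1 : ∫ t in (0:ℝ)..B, |g t| = ∫ t in (0:ℝ)..B, g t := by
    apply intervalIntegral.integral_congr
    intro x hx
    rw [Set.uIcc_of_le hB0] at hx
    have h0 := hx.1
    have h1 : 0 ≤ 1 - x := by linarith [hx.2]
    have h2 : 0 ≤ (n : ℝ) - (n + 1) * x := by
      have := mul_le_mul_of_nonneg_left hx.2 (by positivity : (0:ℝ) ≤ n + 1)
      linarith
    apply abs_of_nonneg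
    simp only [hg]
    positivity
  have e2 : ∫ t in B..(1:ℝ), |g t| = ∫ t in B..(1:ℝ), - g t := by
    apply intervalIntegral.integral_congr
    intro x hx
    rw [Set.uIcc_of_le hB1] at hx
    have h0 : 0 ≤ x := hB0.trans hx.1
    have h1 : 0 ≤ 1 - x := by linarith [hx.2]
    have h2 : (n : ℝ) - (n + 1) * x ≤ 0 := by
      have := mul_le_mul_of_nonneg_left hx.1 (by positivity : (0:ℝ) ≤ n + 1)
      linarith
    apply abs_of_nonpos
    simp only [hg]
    exact mul_nonpos_of_nonneg_of_nonpos (by positivity)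
      (mul_nonpos_of_nonneg_of_nonpos (by positivity) h2)
  rw [e1, e2, intervalIntegral.integral_neg, hi, hi]
  simp [hm.ne', hn.ne']
  ring


/-- With `A = (n+1)^{n+1}/nⁿ`, `B = n/(n+1)`, `f(t) = (A tⁿ (1−t))^m` and
`λ₀ = 2(Bⁿ − B^{n+1})^m (mn+m+1)!/(m!·(mn)!)`, we have
`λ₀ ≤ (∫₀¹ (1+δt)² |f′(t)| dt)/(∫₀¹ f(t) dt) ≤ (1+δ)² λ₀`. -/
theorem F_one_bounds
    (m n : ℕ) (hm : 0 < m) (hn : 0 < n) (δ : ℝ) (hδ : 0 ≤ δ) :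
    2 * (((n : ℝ) / (n + 1)) ^ n - ((n : ℝ) / (n + 1)) ^ (n + 1)) ^ m *
        (Nat.factorial (m * n + m + 1)) /
        ((Nat.factorial m) * (Nat.factorial (m * n))) ≤
      (∫ t in (0 : ℝ)..1, (1 + δ * t) ^ 2 *
          |deriv (fun t : ℝ =>
            (((n : ℝ) + 1) ^ (n + 1) / (n : ℝ) ^ n * t ^ n * (1 - t)) ^ m) t|) /
        (∫ t in (0 : ℝ)..1,
          (((n : ℝ) + 1) ^ (n + 1) / (n : ℝ) ^ n * t ^ n * (1 - t)) ^ m) ∧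
    (∫ t in (0 : ℝ)..1, (1 + δ * t) ^ 2 *
        |deriv (fun t : ℝ =>
          (((n : ℝ) + 1) ^ (n + 1) / (n : ℝ) ^ n * t ^ n * (1 - t)) ^ m) t|) /
      (∫ t in (0 : ℝ)..1,
        (((n : ℝ) + 1) ^ (n + 1) / (n : ℝ) ^ n * t ^ n * (1 - t)) ^ m) ≤
      (1 + δ) ^ 2 *
        (2 * (((n : ℝ) / (n + 1)) ^ n - ((n : ℝ) / (n + 1)) ^ (n + 1)) ^ m *
          (Nat.factorial (m * n + m + 1)) /
          ((Nat.factorial m) * (Nat.factorial (m * n)))) := by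
  have hA : 0 < ((n : ℝ) + 1) ^ (n + 1) / (n : ℝ) ^ n := by positivity
  generalize ((n : ℝ) + 1) ^ (n + 1) / (n : ℝ) ^ n = A at hA ⊢
  have hI := main_aux m n hm hn A hA
  have hf : ∫ t in (0 : ℝ)..1, (A * t ^ n * (1 - t)) ^ m =
      A ^ m * ∫ t in (0 : ℝ)..1, t ^ (m * n) * (1 - t) ^ m := by
    rw [← intervalIntegral.integral_const_mul]
    congr 1
    ext t
    rw [mul_pow, mul_pow, ← pow_mul, mul_comm n m, mul_assoc]
  have hb := beta_aux m (m * n)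
  have hF : (0 : ℝ) < (m * n + m + 1).factorial := by positivity
  have hfm : (0 : ℝ) < m.factorial := by positivity
  have hfn : (0 : ℝ) < (m * n).factorial := by positivity
  have hf2 : ∫ t in (0 : ℝ)..1, (A * t ^ n * (1 - t)) ^ m =
      A ^ m * ((m * n).factorial * m.factorial / (m * n + m + 1).factorial) := by
    rw [hf, ← hb]
    field_simp
  have hpos : 0 < ∫ t in (0 : ℝ)..1, (A * t ^ n * (1 - t)) ^ m := by
    rw [hf2]; positivity
  have hl : 2 * (((n : ℝ) / (n + 1)) ^ n - ((n : ℝ) / (n + 1)) ^ (n + 1)) ^ m *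
        (Nat.factorial (m * n + m + 1)) /
        ((Nat.factorial m) * (Nat.factorial (m * n))) =
      (∫ t in (0 : ℝ)..1, |deriv (fun t : ℝ => (A * t ^ n * (1 - t)) ^ m) t|) /
        ∫ t in (0 : ℝ)..1, (A * t ^ n * (1 - t)) ^ m := by
    rw [hI, hf2]
    have : A * ((n : ℝ) / (n + 1)) ^ n * (1 - (n : ℝ) / (n + 1)) =
        A * (((n : ℝ) / (n + 1)) ^ n - ((n : ℝ) / (n + 1)) ^ (n + 1)) := by ring
    rw [this, mul_pow]
    generalize (((n : ℝ) / (n + 1)) ^ n - ((n : ℝ) / (n + 1)) ^ (n + 1)) ^ m = C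
    field_simp
  rw [hl]
  have hdc : Continuous (deriv (fun t : ℝ => (A * t ^ n * (1 - t)) ^ m)) := by
    rw [funext fun x => (deriv_aux m n hn A x).deriv]
    fun_prop
  generalize deriv (fun t : ℝ => (A * t ^ n * (1 - t)) ^ m) = g at hdc ⊢
  constructor
  · apply div_le_div_of_nonneg_right _ hpos.le
    apply intervalIntegral.integral_mono_on zero_le_one
      (by apply Continuous.intervalIntegrable; fun_prop)
      (by apply Continuous.intervalIntegrable; fun_prop)
    intro t ht
    have h1 : 0 ≤ δ * t := mul_nonneg hδ ht.1
    exact le_mul_of_one_le_left (abs_nonneg _) (by nlinarith)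
  · rw [← mul_div_assoc, ← intervalIntegral.integral_const_mul]
    apply div_le_div_of_nonneg_right _ hpos.le
    apply intervalIntegral.integral_mono_on zero_le_one
      (by apply Continuous.intervalIntegrable; fun_prop)
      (by apply Continuous.intervalIntegrable; fun_prop)
    intro t ht
    have h1 : 0 ≤ δ * t := mul_nonneg hδ ht.1
    have h2 : δ * t ≤ δ := mul_le_of_le_one_right hδ ht.2
    gcongr
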